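/- Let n ≥ k ≥ 1 with n - k even. There is a bijection between the set of non-crossing half-pairings on [n] with exactly k through strings and the set of two-colorings of the points 1, ..., n (arranged on a circle) using (n-k)/2 black dots and (n+k)/2 white dots: given a half-pairing, color the outward-oriented point of each pair black and all other points (the inward-oriented points of pairs and the through strings) white; this map is a bijection onto the set of all such colorings. -/

import Mathlib

namespace NCC

/-- A letter `u_i^{±1}`: a generator index together with a sign. -/
abbrev Letter (N : ℕ) := Fin N × Bool

/-- The inverse of a letter. -/
def linv {N : ℕ} (l : Letter N) : Letter N := (l.1, !l.2)

/-- One cyclic reduction step: either a linear reduction step (removal of two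
adjacent letters which are inverses of each other), or removal of the first and
last letters when they are inverses of each other. -/
def CyclicStep {N : ℕ} (w w' : List (Letter N)) : Prop :=
  FreeGroup.Red.Step w w' ∨
    ∃ (l : Letter N) (m : List (Letter N)), w = l :: (m ++ [linv l]) ∧ w' = m

/-- `w` reduces cyclically (in zero or more steps) to `v`. -/
def CycReducesTo {N : ℕ} (w v : List (Letter N)) : Prop :=
  Relation.ReflTransGen CyclicStep w v

/-- A word is linearly reduced when no two adjacent letters are inverses of
each other. -/
def LinReduced {N : ℕ} (w : List (Letter N)) : Prop :=
  List.Chain' (fun a b => b ≠ linv a) w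

/-- A word is cyclically reduced iff `w ++ w` is linearly reduced, i.e. it is
linearly reduced and its last letter is not the inverse of its first letter. -/
def CycReduced {N : ℕ} (w : List (Letter N)) : Prop :=
  LinReduced (w ++ w)

/-- A word is reducible to 1 if it linearly reduces to the empty word. -/
def ReducibleToOne {N : ℕ} (w : List (Letter N)) : Prop :=
  FreeGroup.Red w []

/-- A word has good reduction: no nonempty prefix is reducible to 1, and its
linear reduction is cyclically reduced. -/
def GoodReduction {N : ℕ} (w : List (Letter N)) : Prop :=
  (∀ s, s <+: w → s ≠ [] → ¬ ReducibleToOne s) ∧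
    CycReduced (FreeGroup.reduce w)

/-- The first `i` letters of the infinite word `w_∞ = w w w ⋯`. -/
def infTake {N : ℕ} (w : List (Letter N)) (i : ℕ) : List (Letter N) :=
  ((List.replicate i w).flatten).take i

open scoped Classical

/-- `i` and `j` lie in a common block of the partition `P`. -/
def Rel {n : ℕ} (P : Finpartition (Finset.univ : Finset (Fin n))) (i j : Fin n) : Prop :=
  ∃ B ∈ P.parts, i ∈ B ∧ j ∈ B

/-- `i` lies in a singleton block of `P`. -/
def IsSingleton {n : ℕ} (P : Finpartition (Finset.univ : Finset (Fin n))) (i : Fin n) : Prop :=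
  ∃ B ∈ P.parts, i ∈ B ∧ B.card = 1

/-- The relation of the partition `π̃` obtained from `P` by merging all
singleton blocks into a single block. -/
def RelTilde {n : ℕ} (P : Finpartition (Finset.univ : Finset (Fin n))) (i j : Fin n) : Prop :=
  Rel P i j ∨ (IsSingleton P i ∧ IsSingleton P j)

/-- An equivalence-like relation on `[n]` is non-crossing when there are no
`i₁ < i₂ < i₃ < i₄` with `i₁ ∼ i₃`, `i₂ ∼ i₄` but `i₁ ≁ i₂`. -/
def NonCrossingRel {n : ℕ} (r : Fin n → Fin n → Prop) : Prop :=
  ∀ i1 i2 i3 i4 : Fin n, i1 < i2 → i2 < i3 → i3 < i4 → r i1 i3 → r i2 i4 → r i1 i2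

/-- A non-crossing half-pairing on `[n]`: a non-crossing partition all of whose
blocks have at most two elements, with at least one singleton block (through
string), such that merging all singleton blocks still gives a non-crossing
partition. -/
structure HalfPairing (n : ℕ) where
  P : Finpartition (Finset.univ : Finset (Fin n))
  card_le : ∀ B ∈ P.parts, B.card ≤ 2
  exists_singleton : ∃ i, IsSingleton P i
  nc : NonCrossingRel (Rel P)
  nc_tilde : NonCrossingRel (RelTilde P)

/-- `r` and `s` form a pair (a two-element block) of `π`. -/
def Pairs {n : ℕ} (π : HalfPairing n) (r s : Fin n) : Prop :=
  r ≠ s ∧ Rel π.P r s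

/-- Membership in the cyclic interval `[i, j]` (going clockwise from `i` to
`j`, endpoints included). -/
def InCyc {n : ℕ} (i j x : Fin n) : Prop :=
  (x.val + n - i.val) % n ≤ (j.val + n - i.val) % n

/-- Cyclic successor of `i` in `[n]`. -/
def cnext {n : ℕ} (i : Fin n) : Fin n :=
  ⟨(i.val + 1) % n, Nat.mod_lt _ i.pos⟩

/-- Cyclic predecessor of `i` in `[n]`. -/
def cprev {n : ℕ} (i : Fin n) : Fin n :=
  ⟨(i.val + n - 1) % n, Nat.mod_lt _ i.pos⟩

/-- `a + j` modulo `n`. -/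
def cadd {n : ℕ} (a j : Fin n) : Fin n :=
  ⟨(a.val + j.val) % n, Nat.mod_lt _ a.pos⟩

/-- `x - a` modulo `n`. -/
def csub {n : ℕ} (x a : Fin n) : Fin n :=
  ⟨(x.val + n - a.val) % n, Nat.mod_lt _ a.pos⟩

/-- `i` has the outward orientation: it is a singleton, or it is the point of a
pair `(i, s)` such that the cyclic interval `[i, s]` contains no singleton. -/
def OutOriented {n : ℕ} (π : HalfPairing n) (i : Fin n) : Prop :=
  IsSingleton π.P i ∨
    ∃ s, Pairs π i s ∧ ∀ x, InCyc i s x → ¬ IsSingleton π.P x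

/-- `i` covers `j`: both are outward oriented, and either `j` is the cyclic
successor of `i`, or `π` pairs each point of the cyclic interval
`[i+1, j-1]` with another point of `[i+1, j-1]`. -/
def Covers {n : ℕ} (π : HalfPairing n) (i j : Fin n) : Prop :=
  OutOriented π i ∧ OutOriented π j ∧
    (j = cnext i ∨
      ∀ x, InCyc (cnext i) (cprev j) x →
        ∃ y, y ≠ x ∧ InCyc (cnext i) (cprev j) y ∧ Pairs π x y)

/-- The set of through strings (singleton blocks) of `π`. -/
noncomputable def throughFinset {n : ℕ} (π : HalfPairing n) : Finset (Fin n) :=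
  Finset.univ.filter (fun i => IsSingleton π.P i)

/-- The word formed by the letters of `w` at the through strings of `π`,
read in increasing order of position. -/
noncomputable def throughWord {n N : ℕ} (w : Fin n → Letter N) (π : HalfPairing n) :
    List (Letter N) :=
  ((throughFinset π).sort (· ≤ ·)).map w

/-- `π` is a `w`-pairing: paired positions carry mutually inverse letters, and
the through-string letters, read in order, form a cyclic reduction of `w`. -/
def IsWPairing {n N : ℕ} (w : Fin n → Letter N) (π : HalfPairing n) : Prop :=
  (∀ r s, Pairs π r s → w r = linv (w s)) ∧
    CycReducesTo (List.ofFn w) (throughWord w π) ∧ CycReduced (throughWord w π)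

/-- `π` is `w`-admissible: it is a `w`-pairing and `l_i ≠ l_j⁻¹` whenever
`i` covers `j`. -/
def Admissible {n N : ℕ} (w : Fin n → Letter N) (π : HalfPairing n) : Prop :=
  IsWPairing w π ∧ ∀ i j, Covers π i j → w i ≠ linv (w j)

/-!
Cut the circle at a through string. No pair separates it from another through string, so the black
point of every pair is the one met first in the cut order; in particular each pair has exactly one
black point, and `n` is the number of through strings plus twice the number of black dots.

*Injectivity.* Let `π` and `π'` have the same black dots and let `(i, s)` be a pair of `π` with `i`
black. By induction on the length of the arc `[i, s]`, both half-pairings pair the points strictly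
inside the arc in the same way, so `π'` pairs `i` with `s` or with a later point; in the second case
`s` would be black in `π'`.

*Surjectivity.* Let `S` have fewer than `n / 2` elements. Starting from the half-pairing without
pairs, as long as some through string lies in `S`, choose two consecutive through strings, one in
`S` followed by one outside `S`, and join them. Since at each stage less than half of the through
strings lie in `S`, such a choice exists and another through string remains.
-/

section Csub

variable {n : ℕ}

lemma csub_cases (x o : Fin n) :
    (o ≤ x ∧ (csub x o : ℕ) + o = x) ∨ (x < o ∧ (csub x o : ℕ) + o = x + n) := by
  rcases le_or_gt o x with h | h
  · refine Or.inl ⟨h, ?_⟩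
    have : (csub x o : ℕ) = x - o := by
      change (x + n - o) % n = x - o
      rw [show (x : ℕ) + n - o = x - o + n by omega, Nat.add_mod_right]
      exact Nat.mod_eq_of_lt (by omega)
    omega
  · refine Or.inr ⟨h, ?_⟩
    have : (csub x o : ℕ) = x + n - o := Nat.mod_eq_of_lt (by omega)
    omega

lemma csub_left_injective (o : Fin n) : Function.Injective (csub · o) := by
  intro x y (h : csub x o = csub y o)
  have := csub_cases x o
  have := csub_cases y o
  omega

lemma csub_pos {x o : Fin n} (h : x ≠ o) : csub o o < csub x o := by
  have := csub_cases x o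
  have := csub_cases o o
  omega

lemma inCyc_iff {i s x : Fin n} : InCyc i s x ↔ csub x i ≤ csub s i := Iff.rfl

lemma NonCrossingRel.rel_of_csub_lt {r : Fin n → Fin n → Prop} (hr : NonCrossingRel r)
    (he : Equivalence r) (o : Fin n) {a b c d : Fin n} (hab : csub a o < csub b o)
    (hbc : csub b o < csub c o) (hcd : csub c o < csub d o) (hac : r a c) (hbd : r b d) :
    r a b := by
  have h : (a < b ∧ b < c ∧ c < d) ∨ (b < c ∧ c < d ∧ d < a) ∨ (c < d ∧ d < a ∧ a < b) ∨
      (d < a ∧ a < b ∧ b < c) := by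
    have := csub_cases a o
    have := csub_cases b o
    have := csub_cases c o
    have := csub_cases d o
    omega
  rcases h with ⟨h1, h2, h3⟩ | ⟨h1, h2, h3⟩ | ⟨h1, h2, h3⟩ | ⟨h1, h2, h3⟩
  · exact hr _ _ _ _ h1 h2 h3 hac hbd
  · exact he.trans hac (he.symm (hr _ _ _ _ h1 h2 h3 hbd (he.symm hac)))
  · exact he.trans hac (he.trans (hr _ _ _ _ h1 h2 h3 (he.symm hac) (he.symm hbd)) (he.symm hbd))
  · exact he.symm (he.trans hbd (hr _ _ _ _ h1 h2 h3 (he.symm hbd) hac))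

end Csub

section Partition

variable {n : ℕ} {P Q : Finpartition (Finset.univ : Finset (Fin n))} {i j : Fin n}

lemma rel_iff_mem_part : Rel P i j ↔ i ∈ P.part j :=
  P.mem_part_iff_exists.symm

lemma rel_iff_part_eq_part : Rel P i j ↔ P.part i = P.part j :=
  rel_iff_mem_part.trans <| P.mem_part_iff_part_eq_part (Finset.mem_univ i) (Finset.mem_univ j)

lemma rel_equivalence (P : Finpartition (Finset.univ : Finset (Fin n))) : Equivalence (Rel P) where
  refl _ := rel_iff_part_eq_part.mpr rfl
  symm h := rel_iff_part_eq_part.mpr (rel_iff_part_eq_part.mp h).symm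
  trans h h' :=
    rel_iff_part_eq_part.mpr ((rel_iff_part_eq_part.mp h).trans (rel_iff_part_eq_part.mp h'))

lemma rel_ofSetoid {r : Setoid (Fin n)} : Rel (Finpartition.ofSetoid r) i j ↔ r i j :=
  rel_iff_mem_part.trans <| Finpartition.mem_part_ofSetoid_iff_rel.trans r.comm'

lemma rel_bot : Rel (⊥ : Finpartition (Finset.univ : Finset (Fin n))) i j ↔ i = j := by
  simp [Rel, eq_comm]

lemma finpartition_eq_of_rel_iff (h : ∀ i j, Rel P i j ↔ Rel Q i j) : P = Q := by
  have parts_eq (R : Finpartition (Finset.univ : Finset (Fin n))) :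
      R.parts = Finset.univ.image R.part := by
    ext B
    simp only [Finset.mem_image, Finset.mem_univ, true_and]
    exact ⟨fun hB => (R.part_surjOn hB).imp fun _ => And.right,
      fun ⟨i, hi⟩ => hi ▸ R.part_mem.mpr (Finset.mem_univ i)⟩
  have part_eq : P.part = Q.part := by
    ext j i
    rw [← rel_iff_mem_part, ← rel_iff_mem_part, h]
  ext1
  rw [parts_eq, parts_eq, part_eq]

lemma isSingleton_iff : IsSingleton P i ↔ ∀ j, Rel P i j → j = i := by
  constructor
  · rintro ⟨B, hB, hi, hc⟩ j ⟨C, hC, hi', hj⟩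
    obtain rfl := P.eq_of_mem_parts hB hC hi hi'
    exact Finset.card_le_one.mp hc.le _ hj _ hi
  · intro h
    obtain ⟨B, hB, hi⟩ := P.exists_mem (Finset.mem_univ i)
    exact ⟨B, hB, hi, Finset.card_eq_one.mpr ⟨i, Finset.eq_singleton_iff_unique_mem.mpr
      ⟨hi, fun j hj => h j ⟨B, hB, hi, hj⟩⟩⟩⟩

lemma isSingleton_bot : IsSingleton (⊥ : Finpartition (Finset.univ : Finset (Fin n))) i :=
  isSingleton_iff.mpr fun _ h => (rel_bot.mp h).symm

lemma IsSingleton.eq_of_rel (hi : IsSingleton P i) (h : Rel P i j) : j = i :=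
  isSingleton_iff.mp hi j h

lemma relTilde_equivalence (P : Finpartition (Finset.univ : Finset (Fin n))) :
    Equivalence (RelTilde P) where
  refl _ := Or.inl ((rel_equivalence P).refl _)
  symm := Or.imp (rel_equivalence P).symm And.symm
  trans := by
    rintro a b c (hab | ⟨ha, hb⟩) (hbc | ⟨hb', hc⟩)
    · exact Or.inl ((rel_equivalence P).trans hab hbc)
    · exact Or.inr ⟨hb'.eq_of_rel ((rel_equivalence P).symm hab) ▸ hb', hc⟩
    · exact Or.inr ⟨ha, (hb.eq_of_rel hbc).symm ▸ hb⟩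
    · exact Or.inr ⟨ha, hc⟩

lemma NonCrossingRel.of_relTilde (h : NonCrossingRel (RelTilde P)) : NonCrossingRel (Rel P) := by
  intro a b c d hab hbc hcd hac hbd
  refine (h a b c d hab hbc hcd (Or.inl hac) (Or.inl hbd)).resolve_right fun hs => ?_
  exact (hab.trans hbc).ne' (hs.1.eq_of_rel hac)

end Partition

section Black

variable {n : ℕ} {π π' : HalfPairing n} {i s x o : Fin n}

lemma HalfPairing.ext_rel (h : ∀ i j, Rel π.P i j ↔ Rel π'.P i j) : π = π' := by
  have hP : π.P = π'.P := finpartition_eq_of_rel_iff h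
  cases π
  cases π'
  congr

lemma Pairs.symm (h : Pairs π i s) : Pairs π s i :=
  ⟨h.1.symm, (rel_equivalence π.P).symm h.2⟩

lemma Pairs.unique (h : Pairs π i s) (h' : Pairs π i x) : s = x := by
  obtain ⟨his, B, hB, hi, hs⟩ := h
  obtain ⟨hix, C, hC, hi', hx⟩ := h'
  obtain rfl := π.P.eq_of_mem_parts hB hC hi hi'
  by_contra hsx
  exact (π.card_le B hB).not_gt (Finset.two_lt_card.mpr ⟨i, hi, s, hs, x, hx, his, hix, hsx⟩)

lemma Pairs.not_isSingleton (h : Pairs π i s) : ¬ IsSingleton π.P i :=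
  fun hi => h.1 (hi.eq_of_rel h.2).symm

lemma exists_pairs (h : ¬ IsSingleton π.P i) : ∃ s, Pairs π i s := by
  simp only [isSingleton_iff, not_forall] at h
  obtain ⟨s, hs, hne⟩ := h
  exact ⟨s, Ne.symm hne, hs⟩

lemma Pairs.not_relTilde (h : Pairs π i s) (hxi : x ≠ i) (hxs : x ≠ s) : ¬ RelTilde π.P i x := by
  rintro (hr | ⟨hi, -⟩)
  · exact hxs (Pairs.unique ⟨hxi.symm, hr⟩ h)
  · exact h.not_isSingleton hi

lemma relTilde_rel_of_csub_lt (π : HalfPairing n) (o : Fin n) {a b c d : Fin n}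
    (hab : csub a o < csub b o) (hbc : csub b o < csub c o) (hcd : csub c o < csub d o)
    (hac : RelTilde π.P a c) (hbd : RelTilde π.P b d) : RelTilde π.P a b :=
  π.nc_tilde.rel_of_csub_lt (relTilde_equivalence π.P) o hab hbc hcd hac hbd

/-- The black dots of the colouring attached to `π`: the outward-oriented points of its pairs. -/
def Black (π : HalfPairing n) (i : Fin n) : Prop :=
  OutOriented π i ∧ ¬ IsSingleton π.P i

lemma Black.exists_pairs (h : Black π i) : ∃ s, Pairs π i s :=
  NCC.exists_pairs h.2

lemma Pairs.black_iff (h : Pairs π i s) :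
    Black π i ↔ ∀ x, InCyc i s x → ¬ IsSingleton π.P x := by
  constructor
  · rintro ⟨hi | ⟨t, ht, harc⟩, hns⟩
    · exact absurd hi hns
    · exact ht.unique h ▸ harc
  · exact fun harc => ⟨Or.inr ⟨s, h, harc⟩, h.not_isSingleton⟩

/-- Cutting the circle at a through string `o` makes every pair point in the direction of the cut
order: a through string `x` between the ends of the pair would cross it together with `o`. -/
lemma Pairs.black_iff_csub_lt (h : Pairs π i s) (ho : IsSingleton π.P o) :
    Black π i ↔ csub i o < csub s o := by
  have hio : i ≠ o := fun e => h.not_isSingleton (e ▸ ho)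
  rw [h.black_iff]
  constructor
  · intro harc
    have hos : ¬ csub o i ≤ csub s i := fun hle => harc o hle ho
    have := h.1
    have := csub_cases i o
    have := csub_cases s o
    have := csub_cases o i
    have := csub_cases s i
    omega
  · intro hlt x hx hxs
    have hxi : x ≠ i := fun e => h.not_isSingleton (e ▸ hxs)
    have hxs' : x ≠ s := fun e => h.symm.not_isSingleton (e ▸ hxs)
    have hbetween : csub i o < csub x o ∧ csub x o < csub s o := by
      rw [inCyc_iff] at hx
      have := csub_cases i o
      have := csub_cases s o
      have := csub_cases x o
      have := csub_cases x i
      have := csub_cases s i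
      omega
    have hoi : RelTilde π.P o i := relTilde_rel_of_csub_lt π o (csub_pos hio) hbetween.1
      hbetween.2 (Or.inr ⟨ho, hxs⟩) (Or.inl h.2)
    rcases hoi with hoi | ⟨-, hi⟩
    · exact hio (ho.eq_of_rel hoi)
    · exact h.not_isSingleton hi

lemma Pairs.black_iff_not_black (h : Pairs π i s) : Black π i ↔ ¬ Black π s := by
  obtain ⟨o, ho⟩ := π.exists_singleton
  have hne : csub i o ≠ csub s o := (csub_left_injective o).ne h.1
  rw [h.black_iff_csub_lt ho, h.symm.black_iff_csub_lt ho]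
  omega

/-- The black dots of `π` as a finset. -/
noncomputable def blackFinset (π : HalfPairing n) : Finset (Fin n) :=
  Finset.univ.filter (Black π)

lemma mem_blackFinset : i ∈ blackFinset π ↔ Black π i := by
  simp [blackFinset]

lemma mem_throughFinset : i ∈ throughFinset π ↔ IsSingleton π.P i := by
  simp [throughFinset]

lemma card_throughFinset_add_two_mul_card_blackFinset (π : HalfPairing n) :
    (throughFinset π).card + 2 * (blackFinset π).card = n := by
  set paired := (throughFinset π)ᶜ with h_paired
  have mem_paired {i} : i ∈ paired ↔ ¬ IsSingleton π.P i := by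
    rw [h_paired, Finset.mem_compl, mem_throughFinset]
  have hsub : blackFinset π ⊆ paired := fun i hi =>
    mem_paired.mpr (mem_blackFinset.mp hi).2
  choose! partner h_partner using fun i (hi : ¬ IsSingleton π.P i) => exists_pairs hi
  have partner_partner {i} (hi : ¬ IsSingleton π.P i) : partner (partner i) = i :=
    (h_partner _ (h_partner i hi).symm.not_isSingleton).unique (h_partner i hi).symm
  have card_eq : (blackFinset π).card = (paired \ blackFinset π).card := by
    refine Finset.card_nbij' partner partner ?_ ?_ ?_ ?_ <;>
      simp only [Finset.coe_sdiff, Set.MapsTo, Set.LeftInvOn, Set.mem_sdiff, Finset.mem_coe,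
        mem_paired, mem_blackFinset]
    · exact fun i hi => ⟨(h_partner i hi.2).symm.not_isSingleton,
        (h_partner i hi.2).black_iff_not_black.mp hi⟩
    · exact fun i hi => (h_partner i hi.1).symm.black_iff_not_black.mpr hi.2
    · exact fun i hi => partner_partner hi.2
    · exact fun i hi => partner_partner hi.1
  have h_split := Finset.card_sdiff_add_card_eq_card hsub
  have h_compl := Finset.card_add_card_compl (throughFinset π)
  rw [Fintype.card_fin, ← h_paired] at h_compl
  omega

end Black

section Injective

variable {n : ℕ} {π π' : HalfPairing n} {i s x y : Fin n}

lemma Pairs.nested (h : Pairs π i s) (hxy : Pairs π x y) (hxi : x ≠ i)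
    (hxs : csub x i < csub s i) : y ≠ i ∧ csub y i < csub s i := by
  have hxs' : x ≠ s := fun e => hxs.ne (e ▸ rfl)
  refine ⟨?_, ?_⟩
  · rintro rfl
    exact hxs' (hxy.symm.unique h)
  · by_contra hle
    have hys : csub s i ≠ csub y i := by
      refine (csub_left_injective i).ne ?_
      rintro rfl
      exact hxi (hxy.symm.unique h.symm)
    exact h.not_relTilde hxi hxs' (relTilde_rel_of_csub_lt π i (csub_pos hxi) hxs
      ((not_lt.mp hle).lt_of_ne hys) (Or.inl h.2) (Or.inl hxy.2))

lemma Pairs.csub_lt_of_nested (h : Pairs π i s) (hi : Black π i) (hxy : Pairs π x y)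
    (hx : Black π x) (hxi : x ≠ i) (hxs : csub x i < csub s i) : csub y x < csub s i := by
  have hys := (h.nested hxy hxi hxs).2
  obtain ⟨o, ho⟩ := π.exists_singleton
  have hos : ¬ csub o i ≤ csub s i := fun hle => h.black_iff.mp hi o hle ho
  have hoy : ¬ csub o x ≤ csub y x := fun hle => hxy.black_iff.mp hx o hle ho
  have := csub_cases o i
  have := csub_cases s i
  have := csub_cases x i
  have := csub_cases y i
  have := csub_cases y x
  have := csub_cases o x
  omega

lemma Pairs.of_black_iff (hb : ∀ j, Black π j ↔ Black π' j) (h : Pairs π i s)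
    (hi : Black π i) : Pairs π' i s := by
  induction hd : csub s i using WellFoundedLT.induction generalizing i s with
  | ind d ih =>
  subst hd
  -- By induction, `π'` pairs the points strictly inside the arc `[i, s]` among themselves.
  have inside {x y} (hxi : x ≠ i) (hxs : csub x i < csub s i) (hxy : Pairs π' x y) :
      y ≠ i ∧ csub y i < csub s i := by
    obtain ⟨z, hxz⟩ := exists_pairs (h.black_iff.mp hi x hxs.le)
    obtain ⟨hzi, hzs⟩ := h.nested hxz hxi hxs
    have hxz' : Pairs π' x z := by
      by_cases hx : Black π x
      · exact ih _ (h.csub_lt_of_nested hi hxz hx hxi hxs) hxz hx rfl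
      · have hz : Black π z := hxz.symm.black_iff_not_black.mpr hx
        exact (ih _ (h.csub_lt_of_nested hi hxz.symm hz hzi hzs) hxz.symm hz rfl).symm
    exact hxz'.unique hxy ▸ ⟨hzi, hzs⟩
  obtain ⟨s', hs'⟩ := ((hb i).mp hi).exists_pairs
  have hle : csub s i ≤ csub s' i := by
    by_contra! hlt
    exact (inside hs'.1.symm hlt hs'.symm).1 rfl
  rcases hle.eq_or_lt with heq | hlt
  · exact csub_left_injective i heq ▸ hs'
  -- Otherwise `s` would be black in `π'`, its partner lying between `s` and `s'`.
  have hi' := hs'.black_iff.mp ((hb i).mp hi)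
  obtain ⟨t, hst⟩ := exists_pairs (hi' s hlt.le)
  obtain ⟨hti, hts'⟩ := hs'.nested hst h.1.symm hlt
  have hts : ¬ csub t i < csub s i := fun hts => lt_irrefl _ (inside hti hts hst.symm).2
  have hs : Black π' s := hst.black_iff.mpr fun z hz => hi' z <| by
    rw [inCyc_iff] at hz ⊢
    have := csub_cases z i
    have := csub_cases s i
    have := csub_cases s' i
    have := csub_cases t i
    have := csub_cases z s
    have := csub_cases t s
    omega
  exact absurd ((hb s).mpr hs) (h.black_iff_not_black.mp hi)

lemma blackFinset_injective : Function.Injective (blackFinset (n := n)) := by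
  have rel_of_rel {π π' : HalfPairing n} (hb : ∀ i, Black π i ↔ Black π' i) {i j : Fin n}
      (h : Rel π.P i j) : Rel π'.P i j := by
    by_cases hij : i = j
    · exact hij ▸ (rel_equivalence π'.P).refl i
    have hp : Pairs π i j := ⟨hij, h⟩
    by_cases hi : Black π i
    · exact (hp.of_black_iff hb hi).2
    · exact (hp.symm.of_black_iff hb (hp.symm.black_iff_not_black.mpr hi)).symm.2
  intro π π' h
  have hb (i) : Black π i ↔ Black π' i := by rw [← mem_blackFinset, h, mem_blackFinset]
  exact HalfPairing.ext_rel fun i j => ⟨rel_of_rel hb, rel_of_rel fun i => (hb i).symm⟩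

end Injective

section Join

variable {n : ℕ} {P : Finpartition (Finset.univ : Finset (Fin n))} {i s a b : Fin n}

/-- The partition obtained from `P` by merging the block of `s` into that of `i`, when `{s}` is a
singleton block: only the block assigned to `s` changes. -/
noncomputable def mergeSingleton (P : Finpartition (Finset.univ : Finset (Fin n)))
    (i s : Fin n) : Finpartition (Finset.univ : Finset (Fin n)) :=
  Finpartition.ofSetoid (Setoid.ker (Function.update P.part s (P.part i)))

lemma rel_mergeSingleton (hi : IsSingleton P i) (hs : IsSingleton P s) :
    Rel (mergeSingleton P i s) a b ↔ Rel P a b ∨ (a = i ∧ b = s) ∨ (a = s ∧ b = i) := by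
  have rel_left {x} : P.part i = P.part x ↔ x = i := by
    rw [← rel_iff_part_eq_part]
    exact ⟨hi.eq_of_rel, fun h => h ▸ (rel_equivalence P).refl x⟩
  have rel_right {x} : P.part s = P.part x ↔ x = s := by
    rw [← rel_iff_part_eq_part]
    exact ⟨hs.eq_of_rel, fun h => h ▸ (rel_equivalence P).refl x⟩
  rw [mergeSingleton, rel_ofSetoid, Setoid.ker_def, Function.update_apply, Function.update_apply,
    rel_iff_part_eq_part]
  grind

lemma isSingleton_mergeSingleton (hi : IsSingleton P i) (hs : IsSingleton P s) (his : i ≠ s) :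
    IsSingleton (mergeSingleton P i s) a ↔ IsSingleton P a ∧ a ≠ i ∧ a ≠ s := by
  rw [isSingleton_iff]
  simp only [rel_mergeSingleton hi hs]
  constructor
  · intro h
    refine ⟨isSingleton_iff.mpr fun j hj => h j (Or.inl hj), ?_, ?_⟩
    · rintro rfl
      exact his (h s (Or.inr (Or.inl ⟨rfl, rfl⟩))).symm
    · rintro rfl
      exact his (h i (Or.inr (Or.inr ⟨rfl, rfl⟩)))
  · rintro ⟨ha, hai, has⟩ j (hj | ⟨hj, -⟩ | ⟨hj, -⟩)
    · exact ha.eq_of_rel hj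
    · exact absurd hj hai
    · exact absurd hj has

lemma relTilde_mergeSingleton (hi : IsSingleton P i) (hs : IsSingleton P s) (his : i ≠ s) :
    RelTilde (mergeSingleton P i s) a b ↔
      Rel P a b ∨ (IsSingleton P a ∧ IsSingleton P b ∧ (a = i ∨ a = s ↔ b = i ∨ b = s)) := by
  rw [RelTilde, rel_mergeSingleton hi hs, isSingleton_mergeSingleton hi hs his,
    isSingleton_mergeSingleton hi hs his]
  have hrefl : Rel P a a := (rel_equivalence P).refl a
  grind

variable {π : HalfPairing n} {x : Fin n}

/-- `s` is the next through string of `π` clockwise after `i`. -/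
structure Consecutive (π : HalfPairing n) (i s : Fin n) : Prop where
  left : IsSingleton π.P i
  right : IsSingleton π.P s
  ne : i ≠ s
  eq_or_eq : ∀ x, InCyc i s x → IsSingleton π.P x → x = i ∨ x = s

lemma exists_consecutive {S : Finset (Fin n)} (hi : i ∈ S) (hiπ : IsSingleton π.P i)
    (hs : s ∉ S) (hsπ : IsSingleton π.P s) : ∃ i ∈ S, ∃ s ∉ S, Consecutive π i s := by
  obtain ⟨⟨i, s⟩, hmem, hmin⟩ := Finset.exists_min_image
    ((throughFinset π ∩ S) ×ˢ (throughFinset π \ S)) (fun p => csub p.2 p.1)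
    ⟨(i, s), by simp [mem_throughFinset, *]⟩
  simp only [Finset.mem_product, Finset.mem_inter, Finset.mem_sdiff, mem_throughFinset,
    Prod.forall] at hmem hmin
  obtain ⟨⟨hiπ, hi⟩, hsπ, hs⟩ := hmem
  refine ⟨i, hi, s, hs, hiπ, hsπ, fun h => hs (h ▸ hi), fun x hx hxπ => ?_⟩
  rw [inCyc_iff] at hx
  have := csub_cases x i
  have := csub_cases s i
  by_cases hxS : x ∈ S
  · have := hmin x s ⟨⟨hxπ, hxS⟩, hsπ, hs⟩
    have := csub_cases s x
    omega
  · have := hmin i x ⟨⟨hiπ, hi⟩, hxπ, hxS⟩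
    omega

lemma Consecutive.csub_lt (h : Consecutive π i s) (hx : IsSingleton π.P x) (hxi : x ≠ i)
    (hxs : x ≠ s) : csub s i < csub x i :=
  not_le.mp fun hle => (h.eq_or_eq x hle hx).elim hxi hxs

lemma Consecutive.card_le_two (h : Consecutive π i s) {B : Finset (Fin n)}
    (hB : B ∈ (mergeSingleton π.P i s).parts) : B.card ≤ 2 := by
  by_contra! hcard
  obtain ⟨a, ha, b, hb, c, hc, hab, hac, hbc⟩ := Finset.two_lt_card.mp hcard
  have rel_or {x} (hx : x ∈ B) := (rel_mergeSingleton h.left h.right).mp ⟨B, hB, ha, hx⟩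
  by_cases haπ : IsSingleton π.P a
  · have hb := (rel_or hb).resolve_left fun hr => hab (haπ.eq_of_rel hr).symm
    have hc := (rel_or hc).resolve_left fun hr => hac (haπ.eq_of_rel hr).symm
    omega
  · have hai : a ≠ i := fun e => haπ (e ▸ h.left)
    have has : a ≠ s := fun e => haπ (e ▸ h.right)
    have hb := (rel_or hb).resolve_right (by simp [hai, has])
    have hc := (rel_or hc).resolve_right (by simp [hai, has])
    exact hbc (Pairs.unique ⟨hab, hb⟩ ⟨hac, hc⟩)

/-- Merging `i` and `s` refines `π̃`. Hence in a crossing all four points would be through strings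
of `π`, and one of the two blocks would be `{i, s}`, separating two through strings. -/
lemma Consecutive.nonCrossingRel (h : Consecutive π i s) :
    NonCrossingRel (RelTilde (mergeSingleton π.P i s)) := by
  have relTilde_iff {x y} := relTilde_mergeSingleton h.left h.right h.ne (a := x) (b := y)
  have relTilde_of_merge {x y} (hxy : RelTilde (mergeSingleton π.P i s) x y) : RelTilde π.P x y :=
    (relTilde_iff.mp hxy).imp_right fun ⟨hx, hy, _⟩ => ⟨hx, hy⟩
  intro a b c d hab hbc hcd hac hbd
  have hab' : RelTilde π.P a b :=
    π.nc_tilde a b c d hab hbc hcd (relTilde_of_merge hac) (relTilde_of_merge hbd)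
  have hac' : ¬ Rel π.P a c := fun hr =>
    Pairs.not_relTilde ⟨(hab.trans hbc).ne, hr⟩ hab.ne' hbc.ne hab'
  have hbd' : ¬ Rel π.P b d := fun hr =>
    Pairs.not_relTilde ⟨(hbc.trans hcd).ne, hr⟩ hab.ne (hab.trans (hbc.trans hcd)).ne
      ((relTilde_equivalence π.P).symm hab')
  obtain ⟨ha, hc, hac⟩ := (relTilde_iff.mp hac).resolve_left hac'
  obtain ⟨hb, hd, hbd⟩ := (relTilde_iff.mp hbd).resolve_left hbd'
  refine relTilde_iff.mpr (Or.inr ⟨ha, hb, ?_⟩)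
  have := h.csub_lt ha
  have := h.csub_lt hb
  have := h.csub_lt hc
  have := h.csub_lt hd
  have := csub_cases a i
  have := csub_cases b i
  have := csub_cases c i
  have := csub_cases d i
  have := csub_cases s i
  omega

/-- The half-pairing obtained from `π` by pairing up two consecutive through strings `i` and `s`,
another through string `o` being left. -/
noncomputable def Consecutive.join (h : Consecutive π i s)
    (ho : ∃ o, IsSingleton π.P o ∧ o ≠ i ∧ o ≠ s) : HalfPairing n where
  P := mergeSingleton π.P i s
  card_le _ := h.card_le_two
  exists_singleton := ho.imp fun _ => (isSingleton_mergeSingleton h.left h.right h.ne).mpr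
  nc := h.nonCrossingRel.of_relTilde
  nc_tilde := h.nonCrossingRel

variable {h : Consecutive π i s} {ho : ∃ o, IsSingleton π.P o ∧ o ≠ i ∧ o ≠ s}

lemma isSingleton_join : IsSingleton (h.join ho).P x ↔ IsSingleton π.P x ∧ x ≠ i ∧ x ≠ s :=
  isSingleton_mergeSingleton h.left h.right h.ne

lemma rel_join : Rel (h.join ho).P a b ↔ Rel π.P a b ∨ (a = i ∧ b = s) ∨ (a = s ∧ b = i) :=
  rel_mergeSingleton h.left h.right

lemma pairs_join : Pairs (h.join ho) i s :=
  ⟨h.ne, rel_join.mpr (Or.inr (Or.inl ⟨rfl, rfl⟩))⟩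

lemma black_join : Black (h.join ho) i :=
  pairs_join.black_iff.mpr fun x hx hxs =>
    have ⟨hxπ, hxi, hxs⟩ := isSingleton_join.mp hxs
    (h.eq_or_eq x hx hxπ).elim hxi hxs

lemma black_join_iff (hx : ¬ IsSingleton π.P x) : Black (h.join ho) x ↔ Black π x := by
  obtain ⟨o, hoπ, ho'⟩ := id ho
  obtain ⟨y, hxy⟩ := exists_pairs hx
  have hxy' : Pairs (h.join ho) x y := ⟨hxy.1, rel_join.mpr (Or.inl hxy.2)⟩
  rw [hxy.black_iff_csub_lt hoπ, hxy'.black_iff_csub_lt (isSingleton_join.mpr ⟨hoπ, ho'⟩)]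

end Join

section Surjective

variable {n : ℕ} {π : HalfPairing n} {S : Finset (Fin n)}

/-- The half-pairing all of whose points are through strings. -/
def allThrough (hn : 0 < n) : HalfPairing n where
  P := ⊥
  card_le := by simp
  exists_singleton := ⟨⟨0, hn⟩, isSingleton_bot⟩
  nc _ _ _ _ hab hbc _ hac _ := absurd (rel_bot.mp hac) (hab.trans hbc).ne
  nc_tilde _ _ _ _ _ _ _ _ _ := Or.inr ⟨isSingleton_bot, isSingleton_bot⟩

/-- The colouring of `π` agrees with the colouring with black dots `S`, except that the through
strings of `π` may still belong to `S`. -/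
def Respects (π : HalfPairing n) (S : Finset (Fin n)) : Prop :=
  ∀ i, ¬ IsSingleton π.P i → (Black π i ↔ i ∈ S)

lemma Respects.join {i s : Fin n} (hπ : Respects π S) (h : Consecutive π i s)
    (ho : ∃ o, IsSingleton π.P o ∧ o ≠ i ∧ o ≠ s) (hi : i ∈ S) (hs : s ∉ S) :
    Respects (h.join ho) S := by
  intro x hx
  by_cases hxπ : IsSingleton π.P x
  · have hx : x = i ∨ x = s := by
      by_contra! hne
      exact hx (isSingleton_join.mpr ⟨hxπ, hne⟩)
    rcases hx with rfl | rfl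
    · exact iff_of_true black_join hi
    · exact iff_of_false (pairs_join.black_iff_not_black.mp black_join) hs
  · exact (black_join_iff hxπ).trans (hπ x hxπ)

lemma Respects.card_eq (hπ : Respects π S) :
    S.card = (blackFinset π).card + (throughFinset π ∩ S).card := by
  have hsdiff : S \ throughFinset π = blackFinset π := by
    ext i
    rw [Finset.mem_sdiff, mem_throughFinset, mem_blackFinset]
    exact ⟨fun h => (hπ i h.2).mpr h.1, fun h => ⟨(hπ i h.2).mp h, h.2⟩⟩
  rw [← hsdiff, Finset.inter_comm, Finset.card_sdiff_add_card_inter]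

lemma Respects.two_mul_card_inter_lt (hπ : Respects π S) (hS : 2 * S.card < n) :
    2 * (throughFinset π ∩ S).card < (throughFinset π).card := by
  have := hπ.card_eq
  have := card_throughFinset_add_two_mul_card_blackFinset π
  omega

lemma Respects.exists_respects_card_lt (hπ : Respects π S) (hS : 2 * S.card < n)
    (hne : (throughFinset π ∩ S).Nonempty) :
    ∃ π' : HalfPairing n, Respects π' S ∧ (throughFinset π').card < (throughFinset π).card := by
  have hlt := hπ.two_mul_card_inter_lt hS
  have hpos := hne.card_pos
  obtain ⟨i, hi⟩ := hne
  obtain ⟨s, hs, hsS⟩ := Finset.exists_mem_notMem_of_card_lt_card (show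
    (throughFinset π ∩ S).card < (throughFinset π).card by omega)
  rw [Finset.mem_inter, mem_throughFinset] at hi
  rw [mem_throughFinset] at hs
  obtain ⟨i, hi, s, hs, h⟩ := exists_consecutive hi.2 hi.1
    (fun hmem => hsS (Finset.mem_inter.mpr ⟨mem_throughFinset.mpr hs, hmem⟩)) hs
  obtain ⟨o, ho, hois⟩ := Finset.exists_mem_notMem_of_card_lt_card (show
    ({i, s} : Finset (Fin n)).card < (throughFinset π).card from
      Finset.card_le_two.trans_lt (by omega))
  have ho : ∃ o, IsSingleton π.P o ∧ o ≠ i ∧ o ≠ s :=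
    ⟨o, mem_throughFinset.mp ho, by simpa using hois⟩
  refine ⟨h.join ho, hπ.join h ho hi hs, Finset.card_lt_card ⟨fun x hx => ?_, fun hle => ?_⟩⟩
  · exact mem_throughFinset.mpr (isSingleton_join.mp (mem_throughFinset.mp hx)).1
  · exact (isSingleton_join.mp (mem_throughFinset.mp (hle (mem_throughFinset.mpr h.left)))).2.1 rfl

lemma Respects.exists_blackFinset_eq (hπ : Respects π S) (hS : 2 * S.card < n) :
    ∃ π' : HalfPairing n, blackFinset π' = S := by
  induction hd : (throughFinset π).card using Nat.strong_induction_on generalizing π with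
  | _ d ih =>
  subst hd
  rcases (throughFinset π ∩ S).eq_empty_or_nonempty with hempty | hne
  · have hsub : blackFinset π ⊆ S := fun i hi =>
      (hπ i (mem_blackFinset.mp hi).2).mp (mem_blackFinset.mp hi)
    exact ⟨π, Finset.eq_of_subset_of_card_le hsub (by simp [hπ.card_eq, hempty])⟩
  · obtain ⟨π', hπ', hlt⟩ := hπ.exists_respects_card_lt hS hne
    exact ih _ hlt hπ' rfl

lemma exists_blackFinset_eq (hS : 2 * S.card < n) : ∃ π : HalfPairing n, blackFinset π = S := by
  have hall : Respects (allThrough (Nat.zero_lt_of_lt hS)) S := fun i hi =>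
    absurd isSingleton_bot hi
  exact hall.exists_blackFinset_eq hS

end Surjective

/-- The map sending a non-crossing half-pairing on `[n]` with `k` through
strings to its set of black dots — the outward-oriented points of its pairs
(all other points, i.e. the inward-oriented points and the through strings,
being white) — is a bijection onto the collection of subsets of `[n]` of size
`(n-k)/2`. -/
theorem halfPairing_coloring_bijection (n k : ℕ) (hk : 1 ≤ k) (hkn : k ≤ n)
    (hpar : Even (n - k)) :
    Set.BijOn
      (fun π : HalfPairing n => {i : Fin n | OutOriented π i ∧ ¬ IsSingleton π.P i})
      {π : HalfPairing n | (throughFinset π).card = k}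
      {S : Set (Fin n) | S.ncard = (n - k) / 2} := by
  have hblack (π : HalfPairing n) :
      {i | OutOriented π i ∧ ¬ IsSingleton π.P i} = (blackFinset π : Set (Fin n)) :=
    (Finset.coe_filter_univ (Black π)).symm
  have hcard (π : HalfPairing n) :
      (throughFinset π).card = k ↔ (blackFinset π).card = (n - k) / 2 := by
    have := card_throughFinset_add_two_mul_card_blackFinset π
    grind
  simp only [hblack]
  refine ⟨fun π hπ => ?_, (Finset.coe_injective.comp blackFinset_injective).injOn, fun S hS => ?_⟩
  · exact (Set.ncard_coe_finset _).trans ((hcard π).mp hπ)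
  · lift S to Finset (Fin n) using S.toFinite
    have hS : S.card = (n - k) / 2 := (Set.ncard_coe_finset S).symm.trans hS
    obtain ⟨π, rfl⟩ := exists_blackFinset_eq (S := S) (by omega)
    exact ⟨π, (hcard π).mpr hS, rfl⟩

end NCC
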